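/- Let f : (0,1) → ℝ satisfy |f(x) − f(y)| ≤ K·h(x, y) for some K ≥ 0 and all x, y ∈ (0,1), and define (Lf)(x) = Σ_{i=1}^k p_i f(φ̃_{A_i}(x)). Then there exist a constant c ∈ ℝ and a constant C ≥ 0 such that for every n ≥ 1 and every x ∈ (0,1), |(Lⁿf)(x) − c| ≤ C·τ(𝒜, p)^{n−1}; in particular the iterates Lⁿf converge uniformly on (0,1) to a constant function. -/

import Mathlib

/-- The projective action `φ̃_A` of `A = (a, b; c, d)` in coordinates on `(0,1)`. -/
noncomputable def phiM (M : Matrix (Fin 2) (Fin 2) ℝ) (x : ℝ) : ℝ :=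
  ((M 0 0 - M 0 1) * x + M 0 1) / ((M 0 0 + M 1 0 - M 0 1 - M 1 1) * x + M 0 1 + M 1 1)

/-- `ψ(A) = min{ad/(bc), bc/(ad)}`. -/
noncomputable def psiM (M : Matrix (Fin 2) (Fin 2) ℝ) : ℝ :=
  min (M 0 0 * M 1 1 / (M 0 1 * M 1 0)) (M 0 1 * M 1 0 / (M 0 0 * M 1 1))

/-- The Birkhoff contraction coefficient `τ(A) = (1 − √ψ(A))/(1 + √ψ(A))`. -/
noncomputable def tauM (M : Matrix (Fin 2) (Fin 2) ℝ) : ℝ :=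
  (1 - Real.sqrt (psiM M)) / (1 + Real.sqrt (psiM M))

/-- The Hilbert projective metric in coordinates on `(0,1)`. -/
noncomputable def hilbMetric (x y : ℝ) : ℝ :=
  |Real.log (x * (1 - y) / (y * (1 - x)))|

/-- The transfer operator `(Lf)(x) = Σ_i p_i f(φ̃_{A_i}(x))`. -/
noncomputable def transferOp {k : ℕ} (A : Fin k → Matrix (Fin 2) (Fin 2) ℝ)
    (p : Fin k → ℝ) (g : ℝ → ℝ) : ℝ → ℝ :=
  fun x => ∑ i, p i * g (phiM (A i) x)

noncomputable def gM (a b c d s : ℝ) : ℝ :=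
  Real.log (a * Real.exp s + b) - Real.log (c * Real.exp s + d)

noncomputable def logitM (x : ℝ) : ℝ := Real.log (x / (1 - x))

lemma tauM_eq (M : Matrix (Fin 2) (Fin 2) ℝ) (h : ∀ s t, 0 < M s t) :
    tauM M = |Real.sqrt (M 0 0 * M 1 1) - Real.sqrt (M 0 1 * M 1 0)| /
      (Real.sqrt (M 0 0 * M 1 1) + Real.sqrt (M 0 1 * M 1 0)) := by
  have h1 : 0 < M 0 0 * M 1 1 := mul_pos (h _ _) (h _ _)
  have h2 : 0 < M 0 1 * M 1 0 := mul_pos (h _ _) (h _ _)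
  unfold tauM psiM
  generalize M 0 0 * M 1 1 = u at *
  generalize M 0 1 * M 1 0 = v at *
  have hu := Real.sqrt_pos.2 h1
  have hv := Real.sqrt_pos.2 h2
  rcases le_total u v with huv | huv
  · have e : min (u / v) (v / u) = u / v := by
      apply min_eq_left
      rw [div_le_div_iff₀ h2 h1]
      nlinarith
    have hs := Real.sqrt_le_sqrt huv
    rw [e, Real.sqrt_div h1.le, abs_of_nonpos (by linarith)]
    field_simp
    ring
  · have e : min (u / v) (v / u) = v / u := by
      apply min_eq_right
      rw [div_le_div_iff₀ h1 h2]
      nlinarith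
    have hs := Real.sqrt_le_sqrt huv
    rw [e, Real.sqrt_div h2.le, abs_of_nonneg (by linarith)]
    field_simp

lemma tauM_nonneg (M : Matrix (Fin 2) (Fin 2) ℝ) (h : ∀ s t, 0 < M s t) : 0 ≤ tauM M := by
  rw [tauM_eq M h]; positivity

lemma tauM_lt_one (M : Matrix (Fin 2) (Fin 2) ℝ) (h : ∀ s t, 0 < M s t) : tauM M < 1 := by
  rw [tauM_eq M h]
  have hu := Real.sqrt_pos.2 (mul_pos (h 0 0) (h 1 1))
  have hv := Real.sqrt_pos.2 (mul_pos (h 0 1) (h 1 0))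
  rw [div_lt_one (by linarith), abs_lt]
  constructor <;> linarith

lemma deriv_bound (a b c d E : ℝ) (ha : 0 < a) (hb : 0 < b) (hc : 0 < c) (hd : 0 < d)
    (hE : 0 < E) :
    |a * E / (a * E + b) - c * E / (c * E + d)| ≤
      |Real.sqrt (a * d) - Real.sqrt (b * c)| / (Real.sqrt (a * d) + Real.sqrt (b * c)) := by
  have hP := Real.sqrt_pos.2 (mul_pos ha hd)
  have hQ := Real.sqrt_pos.2 (mul_pos hb hc)
  have eP := Real.sq_sqrt (mul_pos ha hd).le
  have eQ := Real.sq_sqrt (mul_pos hb hc).le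
  generalize Real.sqrt (a * d) = P at *
  generalize Real.sqrt (b * c) = Q at *
  have h1 : 0 < a * E + b := by positivity
  have h2 : 0 < c * E + d := by positivity
  have key : a * E / (a * E + b) - c * E / (c * E + d)
      = E * ((P - Q) * (P + Q)) / ((a * E + b) * (c * E + d)) := by
    have : (P - Q) * (P + Q) = a * d - b * c := by rw [← eP, ← eQ]; ring
    rw [this]
    field_simp
    ring
  have h3 : 2 * E * (P * Q) ≤ a * c * E ^ 2 + b * d := by
    apply le_of_sq_le_sq _ (by positivity)
    have : (2 * E * (P * Q)) ^ 2 = 4 * E ^ 2 * ((a * d) * (b * c)) := by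
      rw [← eP, ← eQ]; ring
    rw [this]
    nlinarith [sq_nonneg (a * c * E ^ 2 - b * d)]
  rw [key, abs_div, abs_mul, abs_mul, abs_of_pos hE, abs_of_pos (add_pos hP hQ),
    abs_of_pos (mul_pos h1 h2), div_le_div_iff₀ (mul_pos h1 h2) (add_pos hP hQ)]
  have h4 : E * (P + Q) ^ 2 ≤ (a * E + b) * (c * E + d) := by
    have : E * (P + Q) ^ 2 = E * (a * d) + E * (b * c) + 2 * E * (P * Q) := by
      rw [← eP, ← eQ]; ring
    rw [this]; nlinarith
  nlinarith [mul_le_mul_of_nonneg_left h4 (abs_nonneg (P - Q))]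

lemma gM_lip (a b c d : ℝ) (ha : 0 < a) (hb : 0 < b) (hc : 0 < c) (hd : 0 < d) (s t : ℝ) :
    |gM a b c d s - gM a b c d t| ≤
      |Real.sqrt (a * d) - Real.sqrt (b * c)| / (Real.sqrt (a * d) + Real.sqrt (b * c))
        * |s - t| := by
  have := Convex.norm_image_sub_le_of_norm_hasDerivWithin_le (f := gM a b c d)
    (f' := fun s => a * Real.exp s / (a * Real.exp s + b) - c * Real.exp s / (c * Real.exp s + d))
    (s := Set.univ) (x := t) (y := s) ?_
    (fun x _ => deriv_bound a b c d (Real.exp x) ha hb hc hd (Real.exp_pos x))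
    convex_univ (Set.mem_univ _) (Set.mem_univ _)
  · simpa [Real.norm_eq_abs] using this
  · intro x _
    apply HasDerivAt.hasDerivWithinAt
    have hE := Real.exp_pos x
    have h1 : a * Real.exp x + b ≠ 0 := by positivity
    have h2 : c * Real.exp x + d ≠ 0 := by positivity
    exact ((((Real.hasDerivAt_exp x).const_mul a).add_const b).log h1).sub
      ((((Real.hasDerivAt_exp x).const_mul c).add_const d).log h2)

lemma gM_bdd (a b c d : ℝ) (ha : 0 < a) (hb : 0 < b) (hc : 0 < c) (hd : 0 < d) (s : ℝ) :
    |gM a b c d s| ≤ |Real.log (a / c + b / d)| + |Real.log (c / a + d / b)| := by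
  have aux : ∀ a b c d : ℝ, 0 < a → 0 < b → 0 < c → 0 < d →
      Real.log (a * Real.exp s + b) - Real.log (c * Real.exp s + d)
        ≤ |Real.log (a / c + b / d)| := by
    intro a b c d ha hb hc hd
    have hE := Real.exp_pos s
    generalize Real.exp s = E at *
    rw [← Real.log_div (by positivity) (by positivity)]
    refine le_trans (Real.log_le_log (by positivity) ?_) (le_abs_self _)
    rw [div_le_iff₀ (by positivity)]
    have : (a / c + b / d) * (c * E + d) = a * E + b + a / c * d + b / d * c * E := by
      field_simp; ring
    rw [this]
    have : 0 < a / c * d := by positivity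
    have : 0 < b / d * c * E := by positivity
    linarith
  have h1 := aux a b c d ha hb hc hd
  have h2 := aux c d a b hc hd ha hb
  have h3 := abs_nonneg (Real.log (a / c + b / d))
  have h4 := abs_nonneg (Real.log (c / a + d / b))
  unfold gM
  rw [abs_le]
  constructor <;> linarith

lemma hilb_eq {x y : ℝ} (hx : x ∈ Set.Ioo (0 : ℝ) 1) (hy : y ∈ Set.Ioo (0 : ℝ) 1) :
    hilbMetric x y = |logitM x - logitM y| := by
  obtain ⟨hx0, hx1⟩ := hx
  obtain ⟨hy0, hy1⟩ := hy
  have hx2 : 0 < 1 - x := by linarith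
  have hy2 : 0 < 1 - y := by linarith
  unfold hilbMetric logitM
  rw [← Real.log_div (by positivity) (by positivity)]
  congr 2
  field_simp

lemma phi_spec (M : Matrix (Fin 2) (Fin 2) ℝ) (h : ∀ s t, 0 < M s t) {x : ℝ}
    (hx : x ∈ Set.Ioo (0 : ℝ) 1) :
    phiM M x ∈ Set.Ioo (0 : ℝ) 1 ∧
      logitM (phiM M x) = gM (M 0 0) (M 0 1) (M 1 0) (M 1 1) (logitM x) := by
  obtain ⟨hx0, hx1⟩ := hx
  have hx2 : 0 < 1 - x := by linarith
  have ha := h 0 0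
  have hb := h 0 1
  have hc := h 1 0
  have hd := h 1 1
  unfold phiM gM logitM
  generalize M 0 0 = a at *
  generalize M 0 1 = b at *
  generalize M 1 0 = c at *
  generalize M 1 1 = d at *
  have hN : 0 < a * x + b * (1 - x) := by positivity
  have hR : 0 < c * x + d * (1 - x) := by positivity
  have e1 : (a - b) * x + b = a * x + b * (1 - x) := by ring
  have e2 : (a + c - b - d) * x + b + d
      = (a * x + b * (1 - x)) + (c * x + d * (1 - x)) := by ring
  rw [e1, e2, Real.exp_log (by positivity)]
  refine ⟨⟨by positivity, ?_⟩, ?_⟩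
  · rw [div_lt_one (by positivity)]; linarith
  · rw [← Real.log_div (by positivity) (by positivity)]
    congr 1
    have e3 : a * (x / (1 - x)) + b = (a * x + b * (1 - x)) / (1 - x) := by field_simp
    have e4 : c * (x / (1 - x)) + d = (c * x + d * (1 - x)) / (1 - x) := by field_simp
    rw [e3, e4]
    generalize a * x + b * (1 - x) = N at *
    generalize c * x + d * (1 - x) = R at *
    have e5 : 1 - N / (N + R) = R / (N + R) := by field_simp; ring
    rw [e5]
    field_simp

lemma phi_contr (M : Matrix (Fin 2) (Fin 2) ℝ) (h : ∀ s t, 0 < M s t) {x y : ℝ}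
    (hx : x ∈ Set.Ioo (0 : ℝ) 1) (hy : y ∈ Set.Ioo (0 : ℝ) 1) :
    hilbMetric (phiM M x) (phiM M y) ≤ tauM M * hilbMetric x y := by
  rw [hilb_eq (phi_spec M h hx).1 (phi_spec M h hy).1, hilb_eq hx hy, (phi_spec M h hx).2,
    (phi_spec M h hy).2, tauM_eq M h]
  exact gM_lip _ _ _ _ (h _ _) (h _ _) (h _ _) (h _ _) _ _

lemma phi_diam (M : Matrix (Fin 2) (Fin 2) ℝ) (h : ∀ s t, 0 < M s t) :
    ∃ B : ℝ, 0 ≤ B ∧ ∀ x ∈ Set.Ioo (0 : ℝ) 1, ∀ y ∈ Set.Ioo (0 : ℝ) 1,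
      hilbMetric (phiM M x) (phiM M y) ≤ B := by
  refine ⟨2 * (|Real.log (M 0 0 / M 1 0 + M 0 1 / M 1 1)|
    + |Real.log (M 1 0 / M 0 0 + M 1 1 / M 0 1)|), by positivity, ?_⟩
  intro x hx y hy
  rw [hilb_eq (phi_spec M h hx).1 (phi_spec M h hy).1, (phi_spec M h hx).2,
    (phi_spec M h hy).2]
  have b := gM_bdd _ _ _ _ (h 0 0) (h 0 1) (h 1 0) (h 1 1)
  have := abs_sub (gM (M 0 0) (M 0 1) (M 1 0) (M 1 1) (logitM x))
    (gM (M 0 0) (M 0 1) (M 1 0) (M 1 1) (logitM y))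
  linarith [b (logitM x), b (logitM y)]

theorem stmt13 {k : ℕ} (hk : 1 ≤ k) (A : Fin k → Matrix (Fin 2) (Fin 2) ℝ)
    (hpos : ∀ i s t, 0 < A i s t) (hinv : ∀ i, IsUnit (A i))
    (p : Fin k → ℝ) (hp : ∀ i, 0 ≤ p i) (hps : ∑ i, p i = 1)
    (f : ℝ → ℝ) (K : ℝ) (hK : 0 ≤ K)
    (hlip : ∀ x ∈ Set.Ioo (0 : ℝ) 1, ∀ y ∈ Set.Ioo (0 : ℝ) 1,
      |f x - f y| ≤ K * hilbMetric x y) :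
    ∃ c C : ℝ, 0 ≤ C ∧ ∀ n : ℕ, 1 ≤ n → ∀ x ∈ Set.Ioo (0 : ℝ) 1,
      |((transferOp A p)^[n] f) x - c| ≤ C * (∑ i, p i * tauM (A i)) ^ (n - 1) := by
  set τ := ∑ i, p i * tauM (A i) with hτ
  have hτ0 : 0 ≤ τ := Finset.sum_nonneg fun i _ => mul_nonneg (hp i) (tauM_nonneg _ (hpos i))
  have hτ1 : τ < 1 := by
    have hex : ∃ i, 0 < p i := by
      by_contra hcon
      push Not at hcon
      have : ∑ i, p i ≤ 0 := Finset.sum_nonpos fun i _ => hcon i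
      linarith
    obtain ⟨j, hj⟩ := hex
    rw [← hps, hτ]
    apply Finset.sum_lt_sum
    · intro i _
      exact mul_le_of_le_one_right (hp i) (tauM_lt_one _ (hpos i)).le
    · exact ⟨j, Finset.mem_univ _, mul_lt_of_lt_one_right hj (tauM_lt_one _ (hpos j))⟩
  have hphi : ∀ i, ∀ x ∈ Set.Ioo (0 : ℝ) 1, phiM (A i) x ∈ Set.Ioo (0 : ℝ) 1 :=
    fun i x hx => (phi_spec (A i) (hpos i) hx).1
  choose B hB0 hB using fun i => phi_diam (A i) (hpos i)
  set D := ∑ i, p i * B i with hD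
  have hD0 : 0 ≤ D := Finset.sum_nonneg fun i _ => mul_nonneg (hp i) (hB0 i)
  have hdiff : ∀ (g : ℝ → ℝ) (x y : ℝ), |transferOp A p g x - transferOp A p g y|
      ≤ ∑ i, p i * |g (phiM (A i) x) - g (phiM (A i) y)| := by
    intro g x y
    unfold transferOp
    rw [← Finset.sum_sub_distrib]
    refine (Finset.abs_sum_le_sum_abs _ _).trans (Finset.sum_le_sum fun i _ => ?_)
    rw [← mul_sub, abs_mul, abs_of_nonneg (hp i)]
  have hL : ∀ n : ℕ, ∀ x ∈ Set.Ioo (0 : ℝ) 1, ∀ y ∈ Set.Ioo (0 : ℝ) 1,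
      |((transferOp A p)^[n] f) x - ((transferOp A p)^[n] f) y| ≤ K * τ ^ n * hilbMetric x y := by
    intro n
    induction n with
    | zero => simpa using hlip
    | succ n ih =>
      intro x hx y hy
      rw [Function.iterate_succ_apply']
      refine (hdiff _ x y).trans ?_
      calc _ ≤ ∑ i, p i * (K * τ ^ n * (tauM (A i) * hilbMetric x y)) := by
            refine Finset.sum_le_sum fun i _ => mul_le_mul_of_nonneg_left ?_ (hp i)
            exact (ih _ (hphi i x hx) _ (hphi i y hy)).trans
              (mul_le_mul_of_nonneg_left (phi_contr _ (hpos i) hx hy) (by positivity))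
        _ = K * τ ^ n * hilbMetric x y * ∑ i, p i * tauM (A i) := by
            rw [Finset.mul_sum]
            exact Finset.sum_congr rfl fun i _ => by ring
        _ = _ := by rw [← hτ]; ring
  have hosc : ∀ n : ℕ, ∀ x ∈ Set.Ioo (0 : ℝ) 1, ∀ y ∈ Set.Ioo (0 : ℝ) 1,
      |((transferOp A p)^[n + 1] f) x - ((transferOp A p)^[n + 1] f) y| ≤ K * D * τ ^ n := by
    intro n x hx y hy
    rw [Function.iterate_succ_apply']
    refine (hdiff _ x y).trans ?_
    calc _ ≤ ∑ i, p i * (K * τ ^ n * B i) := by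
          refine Finset.sum_le_sum fun i _ => mul_le_mul_of_nonneg_left ?_ (hp i)
          exact (hL n _ (hphi i x hx) _ (hphi i y hy)).trans
            (mul_le_mul_of_nonneg_left (hB i x hx y hy) (by positivity))
      _ = K * τ ^ n * ∑ i, p i * B i := by
          rw [Finset.mul_sum]
          exact Finset.sum_congr rfl fun i _ => by ring
      _ = _ := by rw [← hD]; ring
  have hhalf : (1 / 2 : ℝ) ∈ Set.Ioo (0 : ℝ) 1 := by norm_num
  have hu : ∀ n : ℕ, dist (((transferOp A p)^[n + 1] f) (1 / 2))
      (((transferOp A p)^[n + 1 + 1] f) (1 / 2)) ≤ K * D * τ ^ n := by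
    intro n
    rw [Real.dist_eq, Function.iterate_succ_apply' _ (n + 1)]
    set g := (transferOp A p)^[n + 1] f with hg
    have : g (1 / 2) - transferOp A p g (1 / 2)
        = ∑ i, p i * (g (1 / 2) - g (phiM (A i) (1 / 2))) := by
      simp only [mul_sub, Finset.sum_sub_distrib, ← Finset.sum_mul, hps, one_mul]
      rfl
    rw [this]
    calc _ ≤ ∑ i, p i * (K * D * τ ^ n) := by
          refine (Finset.abs_sum_le_sum_abs _ _).trans (Finset.sum_le_sum fun i _ => ?_)
          rw [abs_mul, abs_of_nonneg (hp i)]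
          exact mul_le_mul_of_nonneg_left (hosc n _ hhalf _ (hphi i _ hhalf)) (hp i)
      _ = _ := by rw [← Finset.sum_mul, hps, one_mul]
  obtain ⟨c, hc⟩ := cauchySeq_tendsto_of_complete (cauchySeq_of_le_geometric τ (K * D) hτ1 hu)
  have hτ2 : 0 < 1 - τ := by linarith
  refine ⟨c, K * D + K * D / (1 - τ), by positivity, ?_⟩
  intro n hn x hx
  obtain ⟨m, rfl⟩ := Nat.exists_eq_add_of_le' hn
  have h1 := dist_le_of_le_geometric_of_tendsto τ (K * D) hτ1 hu hc m
  have h2 := hosc m x hx _ hhalf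
  rw [Real.dist_eq] at h1
  have h3 := abs_sub_le (((transferOp A p)^[m + 1] f) x) (((transferOp A p)^[m + 1] f) (1 / 2)) c
  rw [Nat.add_sub_cancel]
  calc _ ≤ K * D * τ ^ m + K * D * τ ^ m / (1 - τ) := by linarith
    _ = _ := by ring
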